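/- arXiv:2010.14801 — 2 statements merged into one kernel-verified Lean document; each statement's English description precedes it below -/
import Mathlib

section
/- Let d ≥ 1 and r ≥ 1 be integers. There is a constant c(r,d) > 0 such that for every n ∈ ℕ, the family of n^d cubes Q_I = ∏_{k=1}^d [(i_k−1)/n, i_k/n], I = (i_1,…,i_d) ∈ {1,…,n}^d, is γ-shattered by U(C^r[0,1]^d) with respect to Lebesgue measure, with γ = c(r,d) n^{−(r+d)}. -/
open MeasureTheory

/-- The closed unit cube `[0,1]^d`. -/
def unitCube (d : ℕ) : Set (Fin d → ℝ) := Set.univ.pi fun _ => Set.Icc 0 1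

/-- Partial derivative (within the unit cube) in direction `i`. -/
noncomputable def pdermW (d : ℕ) (i : Fin d) (f : (Fin d → ℝ) → ℝ) :
    (Fin d → ℝ) → ℝ :=
  fun x => fderivWithin ℝ f (unitCube d) x (Pi.single i 1)

/-- Iterated partial derivative (within the unit cube) along a list of coordinates. -/
noncomputable def iterPDW (d : ℕ) : List (Fin d) → ((Fin d → ℝ) → ℝ) → (Fin d → ℝ) → ℝ
  | [], f => f
  | i :: L, f => pdermW d i (iterPDW d L f)

/-- The unit ball `U(C^r[0,1]^d)`: functions with all partial derivatives of total order
at most `r` existing, continuous, and bounded by `1` on the cube. -/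
def UCr (d r : ℕ) : Set ((Fin d → ℝ) → ℝ) :=
  {f | ContDiffOn ℝ r f (unitCube d) ∧
    ∀ L : List (Fin d), L.length ≤ r → ∀ x ∈ unitCube d, |iterPDW d L f x| ≤ 1}

/-! Fix a smooth bump `φ` with compact support inside the open unit cube, normalized so that all its
derivatives of order at most `r` have norm at most `1`. Rescaling `φ` to a cell of side `1 / n`
multiplies the `k`-th derivative by `n ^ k` and the integral by `n ^ (-d)`. Since the rescaled bumps
have disjoint supports, a combination of them with coefficients of size at most `n ^ (-r)` lies in
`U(C^r[0,1]^d)`, while its integral over each cell is the coefficient of that cell times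
`n ^ (-d) * ∫ φ`. Hence all integrals of size at most `n ^ (-(r + d)) * ∫ φ` can be prescribed
independently on the cells.
-/

open Function Topology

lemma norm_sum_le_of_pairwise_eq_zero_or_eq_zero {ι F : Type*} [SeminormedAddCommGroup F]
    {s : Finset ι} {v : ι → F} {C : ℝ} (hC : 0 ≤ C)
    (hv : (s : Set ι).Pairwise fun i j => v i = 0 ∨ v j = 0)
    (hbound : ∀ i ∈ s, ‖v i‖ ≤ C) : ‖∑ i ∈ s, v i‖ ≤ C := by
  by_cases hzero : ∀ i ∈ s, v i = 0
  · simpa [Finset.sum_eq_zero hzero] using hC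
  · push Not at hzero
    obtain ⟨i, hi, hvi⟩ := hzero
    rw [Finset.sum_eq_single_of_mem i hi fun j hj hji => (hv hj hi hji).resolve_right hvi]
    exact hbound i hi

section IteratedFDeriv

variable {𝕜 E F : Type*} [NontriviallyNormedField 𝕜]
  [NormedAddCommGroup E] [NormedSpace 𝕜 E] [NormedAddCommGroup F] [NormedSpace 𝕜 F]

lemma norm_iteratedFDeriv_sum_le_of_pairwiseDisjoint_tsupport {ι : Type*} {s : Finset ι}
    {g : ι → E → F} {k : ℕ} {C : ℝ} {x : E} (hC : 0 ≤ C) (hg : ∀ i ∈ s, ContDiff 𝕜 k (g i))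
    (hdisj : (s : Set ι).PairwiseDisjoint fun i => tsupport (g i))
    (hbound : ∀ i ∈ s, ‖iteratedFDeriv 𝕜 k (g i) x‖ ≤ C) :
    ‖iteratedFDeriv 𝕜 k (fun y => ∑ i ∈ s, g i y) x‖ ≤ C := by
  rw [iteratedFDeriv_fun_sum_apply fun i hi => (hg i hi).contDiffAt]
  refine norm_sum_le_of_pairwise_eq_zero_or_eq_zero hC (fun i hi j hj hij => ?_) hbound
  by_contra! hne
  exact Set.disjoint_left.mp (hdisj hi hj hij) (support_iteratedFDeriv_subset k hne.1)
    (support_iteratedFDeriv_subset k hne.2)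

lemma iteratedFDeriv_comp_smul_sub {f : E → F} {k : ℕ} (hf : ContDiff 𝕜 k f) (t : 𝕜) (v x : E) :
    iteratedFDeriv 𝕜 k (fun y => f (t • y - v)) x =
      t ^ k • iteratedFDeriv 𝕜 k f (t • x - v) := by
  have hf_sub : ContDiff 𝕜 k fun y => f (y - v) := hf.comp (contDiff_id.sub contDiff_const)
  rw [iteratedFDeriv_comp_const_smul t hf_sub, iteratedFDeriv_comp_sub']

lemma exists_norm_iteratedFDeriv_le_of_hasCompactSupport {f : E → F} {r : ℕ}
    (hf : ContDiff 𝕜 r f) (hsupp : HasCompactSupport f) :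
    ∃ C : ℝ, 0 < C ∧ ∀ k ≤ r, ∀ x, ‖iteratedFDeriv 𝕜 k f x‖ ≤ C := by
  have hbound (k : ℕ) : ∃ C, k ≤ r → ∀ x, ‖iteratedFDeriv 𝕜 k f x‖ ≤ C := by
    by_cases hk : k ≤ r
    · have hcont : Continuous (iteratedFDeriv 𝕜 k f) := hf.continuous_iteratedFDeriv (mod_cast hk)
      obtain ⟨C, hC⟩ := hcont.bounded_above_of_compact_support (hsupp.iteratedFDeriv k)
      exact ⟨C, fun _ => hC⟩
    · exact ⟨0, fun h => absurd h hk⟩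
  choose C hC using hbound
  obtain ⟨M, hM⟩ := ((Set.finite_Iic r).image C).bddAbove
  exact ⟨max M 1, by positivity, fun k hk x =>
    (hC k hk x).trans ((hM ⟨k, hk, rfl⟩).trans (le_max_left M 1))⟩

end IteratedFDeriv

lemma exists_contDiff_norm_iteratedFDeriv_le_one_integral_pos {E : Type*} [NormedAddCommGroup E]
    [NormedSpace ℝ E] [FiniteDimensional ℝ E] [MeasurableSpace E] [BorelSpace E] (μ : Measure E)
    [IsFiniteMeasureOnCompacts μ] [μ.IsOpenPosMeasure] {s : Set E} {x₀ : E} (hs : s ∈ 𝓝 x₀)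
    (r : ℕ) :
    ∃ φ : E → ℝ, ContDiff ℝ r φ ∧ tsupport φ ⊆ s ∧
      (∀ k ≤ r, ∀ x, ‖iteratedFDeriv ℝ k φ x‖ ≤ 1) ∧ 0 < ∫ x, φ x ∂μ := by
  obtain ⟨ψ, hψs, hψc, hψ, hψ01, hψx₀⟩ := exists_contDiff_tsupport_subset (n := r) hs
  have hψ_pos : 0 < ∫ x, ψ x ∂μ :=
    hψ.continuous.integral_pos_of_hasCompactSupport_nonneg_nonzero hψc
      (fun x => (hψ01 ⟨x, rfl⟩).1) (x := x₀) (by simp [hψx₀])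
  obtain ⟨C, hC, hψC⟩ := exists_norm_iteratedFDeriv_le_of_hasCompactSupport (𝕜 := ℝ) hψ hψc
  refine ⟨fun x => C⁻¹ • ψ x, hψ.const_smul C⁻¹,
    (closure_mono (support_const_smul_subset C⁻¹ ψ)).trans hψs, fun k hk x => ?_, ?_⟩
  · have hψk : ContDiffAt ℝ k ψ x := (hψ.of_le (mod_cast hk)).contDiffAt
    rw [iteratedFDeriv_const_smul_apply' hψk, norm_smul, Real.norm_of_nonneg (by positivity)]
    exact inv_mul_le_one_of_le₀ (hψC k hk x) hC.le
  · rw [integral_smul]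
    exact smul_pos (inv_pos.mpr hC) hψ_pos

section Integral

variable {E F : Type*} [NormedAddCommGroup F] [NormedSpace ℝ F] [MeasurableSpace E]

lemma setIntegral_sum_eq_integral_of_support_subset {μ : Measure E} {ι : Type*} {t : Finset ι}
    {g : ι → E → F} {s : Set E} (hs : MeasurableSet s) {i : ι} (hi : i ∈ t)
    (hsupp : support (g i) ⊆ s) (hdisj : ∀ j ∈ t, j ≠ i → Disjoint (support (g j)) s) :
    ∫ x in s, ∑ j ∈ t, g j x ∂μ = ∫ x, g i x ∂μ := by
  have hsum : Set.EqOn (fun x => ∑ j ∈ t, g j x) (g i) s := fun x hx =>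
    Finset.sum_eq_single_of_mem i hi fun j hj hji =>
      notMem_support.mp fun hgx => Set.disjoint_left.mp (hdisj j hj hji) hgx hx
  rw [setIntegral_congr_fun hs hsum]
  exact setIntegral_eq_integral_of_forall_compl_eq_zero fun x hx =>
    notMem_support.mp fun hgx => hx (hsupp hgx)

lemma integral_comp_smul_sub [NormedAddCommGroup E] [NormedSpace ℝ E] [FiniteDimensional ℝ E]
    [BorelSpace E] (μ : Measure E) [μ.IsAddHaarMeasure] (f : E → F) (t : ℝ) (v : E) :
    ∫ x, f (t • x - v) ∂μ = |(t ^ Module.finrank ℝ E)⁻¹| • ∫ x, f x ∂μ := by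
  rw [Measure.integral_comp_smul μ (fun y => f (y - v)), integral_sub_right_eq_self f v]

end Integral

section UCr

variable {d r : ℕ} {f : (Fin d → ℝ) → ℝ}

lemma uniqueDiffOn_unitCube (d : ℕ) : UniqueDiffOn ℝ (unitCube d) :=
  UniqueDiffOn.univ_pi fun _ => uniqueDiffOn_Icc one_pos

lemma iterPDW_eqOn_iteratedFDerivWithin (hf : ContDiffOn ℝ r f (unitCube d)) :
    ∀ L : List (Fin d), L.length ≤ r → Set.EqOn (iterPDW d L f)
      (fun x => iteratedFDerivWithin ℝ L.length f (unitCube d) x fun j => Pi.single (L.get j) 1)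
      (unitCube d)
  | [], _ => fun _ _ => rfl
  | i :: L, hL => fun x hx => by
    have ih := iterPDW_eqOn_iteratedFDerivWithin hf L (Nat.le_of_succ_le hL)
    have hdiff := hf.differentiableOn_iteratedFDerivWithin (mod_cast hL) (uniqueDiffOn_unitCube d)
      x hx
    change fderivWithin ℝ (iterPDW d L f) (unitCube d) x (Pi.single i 1) = _
    rw [fderivWithin_congr ih (ih hx),
      fderivWithin_continuousMultilinear_apply_const_apply (uniqueDiffOn_unitCube d x hx) hdiff]
    rfl

lemma mem_UCr_of_norm_iteratedFDeriv_le_one (hf : ContDiff ℝ r f)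
    (hbound : ∀ k ≤ r, ∀ x, ‖iteratedFDeriv ℝ k f x‖ ≤ 1) : f ∈ UCr d r := by
  refine ⟨hf.contDiffOn, fun L hL x hx => ?_⟩
  have hfL : ContDiffAt ℝ L.length f x := (hf.of_le (mod_cast hL)).contDiffAt
  rw [iterPDW_eqOn_iteratedFDerivWithin hf.contDiffOn L hL hx]
  beta_reduce
  rw [iteratedFDerivWithin_eq_iteratedFDeriv (uniqueDiffOn_unitCube d) hfL hx, ← Real.norm_eq_abs]
  have hunit : ‖fun j => (Pi.single (L.get j) 1 : Fin d → ℝ)‖ ≤ 1 :=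
    (pi_norm_le_iff_of_nonneg zero_le_one).mpr fun _ => by rw [Pi.norm_single, norm_one]
  exact (ContinuousMultilinearMap.unit_le_opNorm _ hunit).trans (hbound _ hL x)

end UCr

section Grid

variable {ι : Type*} {n : ℕ}

/-- The integer vector `I`, regarded as a point of `ℝ^ι`; the cell of index `I` in the grid of mesh
`1 / n` is `n⁻¹ • (gridPoint I + [0,1]^ι)`. Indices start at `0`. -/
def gridPoint (I : ι → Fin n) : ι → ℝ := fun k => ((I k : ℕ) : ℝ)

/-- The closed cell of index `I` in the grid of mesh `1 / n`. -/
def gridCell (I : ι → Fin n) : Set (ι → ℝ) :=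
  Set.univ.pi fun k => Set.Icc (((I k : ℕ) : ℝ) / n) ((((I k : ℕ) : ℝ) + 1) / n)

/-- A profile `φ` on the unit cube, transported to the cell of index `I`. -/
def gridBump (φ : (ι → ℝ) → ℝ) (I : ι → Fin n) : (ι → ℝ) → ℝ :=
  fun x => φ ((n : ℝ) • x - gridPoint I)

/-- The combination, with coefficients `a`, of the copies of `φ` in all cells of the grid. -/
def gridSum [Fintype ι] [DecidableEq ι] (φ : (ι → ℝ) → ℝ) (a : (ι → Fin n) → ℝ) : (ι → ℝ) → ℝ :=
  fun x => ∑ I, a I • gridBump φ I x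

lemma mem_gridCell_iff (hn : n ≠ 0) {I : ι → Fin n} {x : ι → ℝ} :
    x ∈ gridCell I ↔ (n : ℝ) • x - gridPoint I ∈ Set.univ.pi fun _ => Set.Icc (0 : ℝ) 1 := by
  have hn' : (0 : ℝ) < n := by positivity
  simp only [gridCell, gridPoint, Set.mem_univ_pi, Set.mem_Icc, div_le_iff₀ hn', le_div_iff₀ hn',
    Pi.sub_apply, Pi.smul_apply, smul_eq_mul, sub_nonneg, sub_le_iff_le_add', mul_comm]

lemma eq_of_sub_gridPoint_mem_Icc_of_sub_gridPoint_mem_Ioo {I J : ι → Fin n} {y : ι → ℝ}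
    (hI : y - gridPoint I ∈ Set.univ.pi fun _ => Set.Icc (0 : ℝ) 1)
    (hJ : y - gridPoint J ∈ Set.univ.pi fun _ => Set.Ioo (0 : ℝ) 1) : I = J := by
  funext k
  obtain ⟨hI₀, hI₁⟩ := hI k (Set.mem_univ k)
  obtain ⟨hJ₀, hJ₁⟩ := hJ k (Set.mem_univ k)
  simp only [gridPoint, Pi.sub_apply] at hI₀ hI₁ hJ₀ hJ₁
  have hIJ : (I k : ℕ) < J k + 1 := by
    exact_mod_cast (by linarith : ((I k : ℕ) : ℝ) < (J k : ℕ) + 1)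
  have hJI : (J k : ℕ) < I k + 1 := by
    exact_mod_cast (by linarith : ((J k : ℕ) : ℝ) < (I k : ℕ) + 1)
  omega

variable {φ : (ι → ℝ) → ℝ}

lemma smul_sub_gridPoint_mem_of_mem_tsupport_gridBump
    (hφ : tsupport φ ⊆ Set.univ.pi fun _ => Set.Ioo (0 : ℝ) 1) {I : ι → Fin n} {x : ι → ℝ}
    (hx : x ∈ tsupport (gridBump φ I)) :
    (n : ℝ) • x - gridPoint I ∈ Set.univ.pi fun _ => Set.Ioo (0 : ℝ) 1 :=
  hφ (tsupport_comp_subset_preimage φ (f := fun y => (n : ℝ) • y - gridPoint I) (by fun_prop) hx)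

lemma pairwise_disjoint_tsupport_gridBump
    (hφ : tsupport φ ⊆ Set.univ.pi fun _ => Set.Ioo (0 : ℝ) 1) :
    Pairwise fun I J : ι → Fin n => Disjoint (tsupport (gridBump φ I)) (tsupport (gridBump φ J)) :=
  fun _ _ hIJ => Set.disjoint_left.mpr fun _ hxI hxJ =>
    hIJ (eq_of_sub_gridPoint_mem_Icc_of_sub_gridPoint_mem_Ioo
      (Set.pi_mono (fun _ _ => Set.Ioo_subset_Icc_self)
        (smul_sub_gridPoint_mem_of_mem_tsupport_gridBump hφ hxI))
      (smul_sub_gridPoint_mem_of_mem_tsupport_gridBump hφ hxJ))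

lemma tsupport_gridBump_subset_gridCell (hn : n ≠ 0)
    (hφ : tsupport φ ⊆ Set.univ.pi fun _ => Set.Ioo (0 : ℝ) 1) (I : ι → Fin n) :
    tsupport (gridBump φ I) ⊆ gridCell I :=
  fun _ hx => (mem_gridCell_iff hn).mpr (Set.pi_mono (fun _ _ => Set.Ioo_subset_Icc_self)
    (smul_sub_gridPoint_mem_of_mem_tsupport_gridBump hφ hx))

lemma disjoint_tsupport_gridBump_gridCell (hn : n ≠ 0)
    (hφ : tsupport φ ⊆ Set.univ.pi fun _ => Set.Ioo (0 : ℝ) 1) {I J : ι → Fin n}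
    (hJI : J ≠ I) :
    Disjoint (tsupport (gridBump φ J)) (gridCell I) :=
  Set.disjoint_left.mpr fun _ hxJ hxI =>
    hJI (eq_of_sub_gridPoint_mem_Icc_of_sub_gridPoint_mem_Ioo ((mem_gridCell_iff hn).mp hxI)
      (smul_sub_gridPoint_mem_of_mem_tsupport_gridBump hφ hxJ)).symm

variable [Fintype ι]

lemma contDiff_gridBump {r : ℕ} (hφ : ContDiff ℝ r φ) (I : ι → Fin n) :
    ContDiff ℝ r (gridBump φ I) :=
  hφ.comp ((contDiff_id.const_smul (n : ℝ)).sub contDiff_const)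

lemma norm_iteratedFDeriv_smul_gridBump {k : ℕ} (hφ : ContDiff ℝ k φ) (c : ℝ) (I : ι → Fin n)
    (x : ι → ℝ) :
    ‖iteratedFDeriv ℝ k (fun y => c • gridBump φ I y) x‖ =
      |c| * ((n : ℝ) ^ k * ‖iteratedFDeriv ℝ k φ ((n : ℝ) • x - gridPoint I)‖) := by
  have hscale : iteratedFDeriv ℝ k (gridBump φ I) x =
      (n : ℝ) ^ k • iteratedFDeriv ℝ k φ ((n : ℝ) • x - gridPoint I) :=
    iteratedFDeriv_comp_smul_sub hφ _ _ _
  rw [iteratedFDeriv_const_smul_apply' (contDiff_gridBump hφ I).contDiffAt, hscale, norm_smul,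
    norm_smul, Real.norm_eq_abs, norm_pow, Real.norm_natCast]

lemma integral_gridBump (φ : (ι → ℝ) → ℝ) (I : ι → Fin n) :
    ∫ x, gridBump φ I x = ((n : ℝ) ^ Fintype.card ι)⁻¹ * ∫ x, φ x := by
  have hscale := integral_comp_smul_sub volume φ (n : ℝ) (gridPoint I)
  rwa [Module.finrank_fintype_fun_eq_card, abs_of_nonneg (by positivity), smul_eq_mul] at hscale

variable [DecidableEq ι]

lemma contDiff_gridSum {r : ℕ} (hφ : ContDiff ℝ r φ) (a : (ι → Fin n) → ℝ) :
    ContDiff ℝ r (gridSum φ a) :=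
  ContDiff.sum fun I _ => (contDiff_gridBump hφ I).const_smul (a I)

lemma norm_iteratedFDeriv_gridSum_le {k : ℕ} {A M : ℝ} {a : (ι → Fin n) → ℝ} (hA : 0 ≤ A)
    (hM : 0 ≤ M) (hφ : ContDiff ℝ k φ) (hsupp : tsupport φ ⊆ Set.univ.pi fun _ => Set.Ioo (0 : ℝ) 1)
    (hbound : ∀ x, ‖iteratedFDeriv ℝ k φ x‖ ≤ M) (ha : ∀ I, |a I| ≤ A) (x : ι → ℝ) :
    ‖iteratedFDeriv ℝ k (gridSum φ a) x‖ ≤ A * ((n : ℝ) ^ k * M) := by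
  refine norm_iteratedFDeriv_sum_le_of_pairwiseDisjoint_tsupport (by positivity)
    (fun I _ => (contDiff_gridBump hφ I).const_smul (a I)) (fun I _ J _ hIJ => ?_)
    (fun I _ => ?_)
  · exact (pairwise_disjoint_tsupport_gridBump hsupp hIJ).mono
      (closure_mono (support_const_smul_subset (a I) _))
      (closure_mono (support_const_smul_subset (a J) _))
  · rw [norm_iteratedFDeriv_smul_gridBump hφ]
    gcongr
    exacts [ha I, hbound _]

lemma setIntegral_gridCell_gridSum (hn : n ≠ 0)
    (hsupp : tsupport φ ⊆ Set.univ.pi fun _ => Set.Ioo (0 : ℝ) 1) (a : (ι → Fin n) → ℝ)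
    (I : ι → Fin n) :
    ∫ x in gridCell I, gridSum φ a x = a I * (((n : ℝ) ^ Fintype.card ι)⁻¹ * ∫ x, φ x) := by
  have hsupport (J : ι → Fin n) :
      support (fun x => a J • gridBump φ J x) ⊆ tsupport (gridBump φ J) :=
    (support_const_smul_subset (a J) _).trans (subset_tsupport _)
  calc ∫ x in gridCell I, gridSum φ a x
      = ∫ x, a I • gridBump φ I x :=
        setIntegral_sum_eq_integral_of_support_subset
          (MeasurableSet.univ_pi fun _ => measurableSet_Icc) (Finset.mem_univ I)
          ((hsupport I).trans (tsupport_gridBump_subset_gridCell hn hsupp I))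
          fun J _ hJI => (disjoint_tsupport_gridBump_gridCell hn hsupp hJI).mono_left (hsupport J)
    _ = a I * (((n : ℝ) ^ Fintype.card ι)⁻¹ * ∫ x, φ x) := by
        rw [integral_smul, integral_gridBump, smul_eq_mul]

end Grid

-- Stated with `n⁻¹ ^ r` so that it also covers `n = 0`, where `0⁻¹ = 0`.
lemma inv_natCast_pow_mul_pow_le_one {k r : ℕ} (hkr : k ≤ r) (n : ℕ) :
    ((n : ℝ)⁻¹) ^ r * (n : ℝ) ^ k ≤ 1 := by
  obtain ⟨m, rfl⟩ := Nat.exists_eq_add_of_le hkr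
  calc ((n : ℝ)⁻¹) ^ (k + m) * (n : ℝ) ^ k = ((n : ℝ) * (n : ℝ)⁻¹) ^ k * ((n : ℝ)⁻¹) ^ m := by ring
    _ ≤ 1 := mul_le_one₀ (pow_le_one₀ (by positivity) mul_inv_le_one) (by positivity)
        (pow_le_one₀ (by positivity) (Nat.cast_inv_le_one n))

lemma gridSum_mem_UCr {d r n : ℕ} {φ : (Fin d → ℝ) → ℝ} {a : (Fin d → Fin n) → ℝ}
    (hφ : ContDiff ℝ r φ) (hsupp : tsupport φ ⊆ Set.univ.pi fun _ => Set.Ioo (0 : ℝ) 1)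
    (hbound : ∀ k ≤ r, ∀ x, ‖iteratedFDeriv ℝ k φ x‖ ≤ 1) (ha : ∀ I, |a I| ≤ ((n : ℝ)⁻¹) ^ r) :
    gridSum φ a ∈ UCr d r :=
  mem_UCr_of_norm_iteratedFDeriv_le_one (contDiff_gridSum hφ a) fun k hk x =>
    calc ‖iteratedFDeriv ℝ k (gridSum φ a) x‖
        ≤ ((n : ℝ)⁻¹) ^ r * ((n : ℝ) ^ k * 1) :=
          norm_iteratedFDeriv_gridSum_le (by positivity) zero_le_one (hφ.of_le (mod_cast hk)) hsupp
            (hbound k hk) ha x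
      _ ≤ 1 := by
          rw [mul_one]
          exact inv_natCast_pow_mul_pow_le_one hk n

theorem UCr_shatters_subcubes_general (d r : ℕ) (hd : 1 ≤ d) :
    ∃ c : ℝ, 0 < c ∧ ∀ n : ℕ, ∀ a : (Fin d → Fin n) → ℝ, (∀ I, |a I| ≤ 1) →
      ∃ f ∈ UCr d r, ∀ I : Fin d → Fin n,
        ∫ x in gridCell I, f x = a I * (c * (n : ℝ) ^ (-((r : ℝ) + (d : ℝ)))) := by
  have hcube : (Set.univ.pi fun _ : Fin d => Set.Ioo (0 : ℝ) 1) ∈ 𝓝 fun _ => (1 / 2 : ℝ) :=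
    set_pi_mem_nhds Set.finite_univ fun _ _ => Ioo_mem_nhds (by norm_num) (by norm_num)
  obtain ⟨φ, hφ, hsupp, hbound, hpos⟩ :=
    exists_contDiff_norm_iteratedFDeriv_le_one_integral_pos volume hcube r
  refine ⟨∫ x, φ x, hpos, fun n a ha => ⟨gridSum φ fun I => a I * ((n : ℝ)⁻¹) ^ r,
    gridSum_mem_UCr hφ hsupp hbound fun I => ?_, fun I => ?_⟩⟩
  · rw [abs_mul, abs_of_nonneg (by positivity : (0 : ℝ) ≤ ((n : ℝ)⁻¹) ^ r)]
    exact mul_le_of_le_one_left (by positivity) (ha I)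
  · have hn : n ≠ 0 := (I ⟨0, hd⟩).pos.ne'
    rw [setIntegral_gridCell_gridSum hn hsupp, Fintype.card_fin, Real.rpow_neg n.cast_nonneg,
      ← Nat.cast_add, Real.rpow_natCast]
    ring

/-- The family of `n^d` congruent subcubes of `[0,1]^d` is `γ`-shattered by
`U(C^r[0,1]^d)` with `γ = c(r,d) n^{-(r+d)}`: for every sign pattern `σ` there is
`f ∈ U(C^r)` with `σ(I) ∫_{Q_I} f ≥ γ` for all `I`. -/
theorem UCr_shatters_subcubes (d r : ℕ) (hd : 1 ≤ d) (hr : 1 ≤ r) :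
    ∃ c : ℝ, 0 < c ∧ ∀ n : ℕ, ∀ σ : (Fin d → Fin n) → ℝ,
      (∀ I, σ I = 1 ∨ σ I = -1) →
      ∃ f ∈ UCr d r, ∀ I : Fin d → Fin n,
        c * (n : ℝ) ^ (-((r : ℝ) + (d : ℝ))) ≤
          σ I * ∫ x in Set.univ.pi fun k =>
            Set.Icc (((I k : ℕ) : ℝ) / n) ((((I k : ℕ) : ℝ) + 1) / n), f x := by
  obtain ⟨c, hc, hprescribe⟩ := UCr_shatters_subcubes_general d r hd
  refine ⟨c, hc, fun n σ hσ => ?_⟩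
  obtain ⟨f, hf, hint⟩ := hprescribe n σ fun I => by rcases hσ I with h | h <;> simp [h]
  refine ⟨f, hf, fun I => ge_of_eq ?_⟩
  have hσ_sq : σ I * σ I = 1 := by rcases hσ I with h | h <;> simp [h]
  calc σ I * ∫ x in gridCell I, f x
      = σ I * σ I * (c * (n : ℝ) ^ (-((r : ℝ) + (d : ℝ)))) := by rw [hint I, mul_assoc]
    _ = c * (n : ℝ) ^ (-((r : ℝ) + (d : ℝ))) := by rw [hσ_sq, one_mul]
end

section
/- Let d ≥ 2 and r ≥ 1 be integers, and let W be the class of functions f : ℝ^d → ℝ that are 2π-periodic in each variable and such that all partial derivatives D^α f with multi-index α ∈ {0,1,…,r}^d exist, are continuous, and satisfy sup_x |D^α f(x)| ≤ 1. Then there is a constant c(r,d) > 0 such that for every m ≥ 1, Θ_m(W, L_1[−π,π]^d) ≥ c(r,d) m^{−rd/(d−1)}. -/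
open MeasureTheory

/-- Partial derivative in direction `i`. -/
noncomputable def pderm (d : ℕ) (i : Fin d) (f : (Fin d → ℝ) → ℝ) : (Fin d → ℝ) → ℝ :=
  fun x => fderiv ℝ f x (Pi.single i 1)

/-- Iterated partial derivative along a list of coordinates. -/
noncomputable def iterPD (d : ℕ) : List (Fin d) → ((Fin d → ℝ) → ℝ) → (Fin d → ℝ) → ℝ
  | [], f => f
  | i :: L, f => pderm d i (iterPD d L f)

/-- The class `W` of functions `2π`-periodic in each variable whose mixed partial
derivatives `D^α f`, `α ∈ {0,…,r}^d`, exist, are continuous, and are bounded by `1`. -/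
def Wmix (d r : ℕ) : Set ((Fin d → ℝ) → ℝ) :=
  {f | (∀ (x : Fin d → ℝ) (i : Fin d),
          f (Function.update x i (x i + 2 * Real.pi)) = f x) ∧
    ∀ L : List (Fin d), (∀ i, L.count i ≤ r) →
      Continuous (iterPD d L f) ∧ (∀ x, |iterPD d L f x| ≤ 1) ∧
      ((∃ i, L.count i < r) → Differentiable ℝ (iterPD d L f))}

/-- The error of best `m`-term approximation of `f` by sums of tensor products, in
`L₁(μ)`. -/
noncomputable def theta1 (d m : ℕ) (μ : Measure (Fin d → ℝ)) (f : (Fin d → ℝ) → ℝ) :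
    ℝ :=
  sInf {r : ℝ | ∃ u : Fin m → Fin d → ℝ → ℝ,
    (∀ s i, Measurable (u s i)) ∧
    Integrable (fun x : Fin d → ℝ => ∑ s, ∏ i, u s i (x i)) μ ∧
    r = ∫ x, |f x - ∑ s, ∏ i, u s i (x i)| ∂μ}

/-!
Split `[-π, π] ^ d` into `n ^ d` cells and put into each cell a fixed bump, scaled by
`± n ^ (-r * d)` up to a constant: every such sum lies in `Wmix d r`. Restricting a sum of `m`
products to the points that occupy the same position in all cells gives a tensor of rank at most
`m`, so it suffices to find signs `ε : [n] ^ d → {±1}` whose `ℓ₁`-distance from all tensors of rank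
at most `m` is at least `n ^ d / 40`, for some `n` of order `m ^ (1 / (d - 1))`.

Such `ε` exist by a dimension count. Tensors of rank at most `m` are the values of a polynomial map
`F` of degree `d` in `m * d * n` variables. If every `ε` were close to some `F u`, then the vector
`η ↦ ∏ k, ((1 + η k * F k u) ^ 2 + 1)`, indexed by all `2 ^ n ^ d` sign patterns `η`, would carry at
least a fraction `(2 / 3) ^ n ^ d` of its squared norm at `η = ε`. A subspace containing such a
vector for every `ε` has dimension at least `(4 / 3) ^ n ^ d`; but these vectors span a space of
dimension at most the number of monomials of degree at most `2 * d * n ^ d` in `m * d * n`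
variables, which is smaller once `m * d * n` is a small enough fraction of `n ^ d`.
-/

open Module MvPolynomial

/-! ### Subspaces with concentrated vectors -/

theorem sum_norm_sq_starProjection_eq_finrank {𝕜 E ι : Type*} [RCLike 𝕜] [NormedAddCommGroup E]
    [InnerProductSpace 𝕜 E] [FiniteDimensional 𝕜 E] [Fintype ι] (b : OrthonormalBasis ι 𝕜 E)
    (V : Submodule 𝕜 E) : ∑ i, ‖V.starProjection (b i)‖ ^ 2 = finrank 𝕜 V := by
  have isProj : LinearMap.IsProj V (V.starProjection : E →ₗ[𝕜] E) :=
    ⟨V.starProjection_apply_mem, fun _ => V.starProjection_eq_self_iff.2⟩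
  have trace_eq := congrArg RCLike.re isProj.trace
  rw [LinearMap.trace_eq_sum_inner _ b, map_sum, RCLike.natCast_re] at trace_eq
  rw [← trace_eq]
  refine Finset.sum_congr rfl fun i _ => ?_
  simpa [V.inner_starProjection_left_eq_right] using
    (V.re_inner_starProjection_eq_normSq (b i)).symm

theorem mul_card_le_finrank_of_le_norm_inner_sq {𝕜 E ι : Type*} [RCLike 𝕜] [NormedAddCommGroup E]
    [InnerProductSpace 𝕜 E] [FiniteDimensional 𝕜 E] [Fintype ι] (b : OrthonormalBasis ι 𝕜 E)
    (V : Submodule 𝕜 E) {κ : ℝ}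
    (concentrated : ∀ i, ∃ v ∈ V, v ≠ 0 ∧ κ * ‖v‖ ^ 2 ≤ ‖inner 𝕜 (b i) v‖ ^ 2) :
    κ * Fintype.card ι ≤ finrank 𝕜 V := by
  have le_projection (i : ι) : κ ≤ ‖V.starProjection (b i)‖ ^ 2 := by
    obtain ⟨v, hv, hv0, hκ⟩ := concentrated i
    have inner_eq : inner 𝕜 (b i) v = inner 𝕜 (V.starProjection (b i)) v := by
      rw [V.inner_starProjection_left_eq_right, V.starProjection_eq_self_iff.2 hv]
    refine le_of_mul_le_mul_right ?_ (pow_pos (norm_pos_iff.2 hv0) 2)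
    calc κ * ‖v‖ ^ 2 ≤ ‖inner 𝕜 (V.starProjection (b i)) v‖ ^ 2 := inner_eq ▸ hκ
      _ ≤ (‖V.starProjection (b i)‖ * ‖v‖) ^ 2 := by gcongr; exact norm_inner_le_norm _ _
      _ = ‖V.starProjection (b i)‖ ^ 2 * ‖v‖ ^ 2 := mul_pow _ _ _
  calc κ * Fintype.card ι = ∑ _i : ι, κ := by simp [mul_comm]
    _ ≤ ∑ i, ‖V.starProjection (b i)‖ ^ 2 := Finset.sum_le_sum fun i _ => le_projection i
    _ = finrank 𝕜 V := sum_norm_sq_starProjection_eq_finrank b V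

theorem mul_card_le_finrank_of_le_sq_apply {ι : Type*} [Fintype ι] (V : Submodule ℝ (ι → ℝ))
    {κ : ℝ} (concentrated : ∀ i, ∃ v ∈ V, v ≠ 0 ∧ κ * ∑ j, v j ^ 2 ≤ v i ^ 2) :
    κ * Fintype.card ι ≤ finrank ℝ V := by
  let toEuclidean : (ι → ℝ) ≃ₗ[ℝ] EuclideanSpace ℝ ι := (WithLp.linearEquiv 2 ℝ (ι → ℝ)).symm
  rw [← toEuclidean.finrank_map_eq V]
  refine mul_card_le_finrank_of_le_norm_inner_sq (EuclideanSpace.basisFun ι ℝ) _ fun i => ?_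
  obtain ⟨v, hv, hv0, hκ⟩ := concentrated i
  refine ⟨toEuclidean v, Submodule.mem_map_of_mem hv, toEuclidean.map_ne_zero_iff.2 hv0, ?_⟩
  simpa [EuclideanSpace.norm_sq_eq, EuclideanSpace.basisFun_inner, toEuclidean] using hκ

/-! ### Polynomial families approximating sign patterns -/

theorem finrank_span_range_eval_le {K σ ι : Type*} [Field K] [Finite σ]
    {G : ι → MvPolynomial σ K} {D : ℕ} (hG : ∀ i, (G i).totalDegree ≤ D) :
    finrank K (Submodule.span K (Set.range fun u i => eval u (G i))) ≤
      finrank K (restrictTotalDegree σ K D) := by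
  let polys (i : ι) : restrictTotalDegree σ K D := ⟨G i, (mem_restrictTotalDegree _ _ _).2 (hG i)⟩
  let applyPolys : Dual K (restrictTotalDegree σ K D) →ₗ[K] ι → K :=
    LinearMap.pi fun i => Dual.eval K _ (polys i)
  have span_le : Submodule.span K (Set.range fun u i => eval u (G i)) ≤ applyPolys.range := by
    rw [Submodule.span_le]
    rintro _ ⟨u, rfl⟩
    exact ⟨(aeval u).toLinearMap ∘ₗ (restrictTotalDegree σ K D).subtype, rfl⟩
  calc finrank K (Submodule.span K (Set.range fun u i => eval u (G i)))
      ≤ finrank K applyPolys.range := Submodule.finrank_mono span_le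
    _ ≤ finrank K (Dual K (restrictTotalDegree σ K D)) := applyPolys.finrank_range_le
    _ = finrank K (restrictTotalDegree σ K D) := Subspace.dual_finrank_eq

theorem card_filter_sum_le_mul_pow_le {σ : Type*} [Fintype σ] [DecidableEq σ] (D : ℕ) {x : ℝ}
    (hx0 : 0 ≤ x) (hx1 : x < 1) :
    ({a ∈ Fintype.piFinset fun _ : σ => Finset.range (D + 1) | ∑ i, a i ≤ D}.card : ℝ) * x ^ D ≤
      (1 - x)⁻¹ ^ Fintype.card σ := by
  set box := Fintype.piFinset fun _ : σ => Finset.range (D + 1)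
  have geom_le : ∑ j ∈ Finset.range (D + 1), x ^ j ≤ (1 - x)⁻¹ :=
    sum_le_hasSum _ (fun _ _ => pow_nonneg hx0 _) (hasSum_geometric_of_lt_one hx0 hx1)
  calc ({a ∈ box | ∑ i, a i ≤ D}.card : ℝ) * x ^ D
      ≤ ∑ a ∈ box with ∑ i, a i ≤ D, ∏ i, x ^ a i := by
        rw [← nsmul_eq_mul]
        refine Finset.card_nsmul_le_sum _ _ _ fun a ha => ?_
        rw [Finset.prod_pow_eq_pow_sum]
        exact pow_le_pow_of_le_one hx0 hx1.le (Finset.mem_filter.1 ha).2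
    _ ≤ ∑ a ∈ box, ∏ i, x ^ a i :=
        Finset.sum_le_sum_of_subset_of_nonneg (Finset.filter_subset _ _) fun _ _ _ => by positivity
    _ = (∑ j ∈ Finset.range (D + 1), x ^ j) ^ Fintype.card σ := by
        rw [Finset.sum_prod_piFinset _ fun _ j => x ^ j, Finset.prod_const, Finset.card_univ]
    _ ≤ (1 - x)⁻¹ ^ Fintype.card σ := by gcongr

theorem finrank_restrictTotalDegree_mul_pow_le {K σ : Type*} [Field K] [Fintype σ] (D : ℕ)
    {x : ℝ} (hx0 : 0 ≤ x) (hx1 : x < 1) :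
    (finrank K (restrictTotalDegree σ K D) : ℝ) * x ^ D ≤ (1 - x)⁻¹ ^ Fintype.card σ := by
  classical
  refine le_trans ?_ (card_filter_sum_le_mul_pow_le (σ := σ) D hx0 hx1)
  gcongr
  rw [restrictTotalDegree, finrank_eq_nat_card_basis (basisRestrictSupport K _),
    Nat.card_coe_set_eq, ← Set.ncard_coe_finset]
  refine Set.ncard_le_ncard_of_injOn (fun a : σ →₀ ℕ => (a : σ → ℕ)) (fun a ha => ?_)
    DFunLike.coe_injective.injOn
  have sum_le : ∑ i, a i ≤ D := by simpa [Finsupp.sum_fintype] using ha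
  simpa [Nat.lt_succ_iff, sum_le] using
    fun i => (Finset.single_le_sum (f := a) (fun _ _ => Nat.zero_le _) (Finset.mem_univ i)).trans
      sum_le

/-- The quadratic weight `(1 + t) ^ 2 + 1`. It is positive and, for `t` near `1`, much larger at `t`
than at `-t`; hence `ε ↦ ∏ k, signWeight (ε k * t k)` concentrates at the signs of `t` as soon as
`t` is close to a sign vector. -/
noncomputable def signWeight (t : ℝ) : ℝ := (1 + t) ^ 2 + 1

theorem signWeight_pos (t : ℝ) : 0 < signWeight t := by
  unfold signWeight
  positivity

theorem signWeight_sq_add_le (t : ℝ) :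
    signWeight t ^ 2 + signWeight (-t) ^ 2 ≤
      6 / 5 * Real.exp (8 * |t - 1|) * signWeight t ^ 2 := by
  rcases le_or_gt |t - 1| (1 / 2) with near | far
  · have one_le_exp : 1 ≤ Real.exp (8 * |t - 1|) := Real.one_le_exp (by positivity)
    obtain ⟨lower, upper⟩ := abs_le.1 near
    have weight_ge : 13 / 4 ≤ signWeight t := by unfold signWeight; nlinarith
    have weight_neg_le : signWeight (-t) ≤ 5 / 4 := by unfold signWeight; nlinarith
    have weight_neg_sq_le : signWeight (-t) ^ 2 ≤ 1 / 5 * signWeight t ^ 2 := by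
      nlinarith [signWeight_pos (-t)]
    nlinarith
  · have exp_ge : 32 ≤ Real.exp (8 * |t - 1|) :=
      calc (32 : ℝ) ≤ 2.7 ^ 4 := by norm_num
        _ ≤ Real.exp 1 ^ 4 := by gcongr; linarith [Real.exp_one_gt_d9]
        _ = Real.exp 4 := by rw [← Real.exp_nat_mul]; norm_num
        _ ≤ Real.exp (8 * |t - 1|) := Real.exp_le_exp.2 (by linarith)
    have weight_neg_le : signWeight (-t) ≤ 6 * signWeight t := by
      unfold signWeight
      nlinarith [sq_nonneg (5 * t + 7)]
    have weight_neg_sq_le : signWeight (-t) ^ 2 ≤ 36 * signWeight t ^ 2 := by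
      nlinarith [signWeight_pos (-t)]
    nlinarith

section SignPatterns

variable {κ : Type*} [Fintype κ]

theorem sum_prod_signWeight_sq [DecidableEq κ] (ε : κ → ℤˣ) (t : κ → ℝ) :
    ∑ η : κ → ℤˣ, (∏ k, signWeight (η k * t k)) ^ 2 =
      ∏ k, (signWeight (ε k * t k) ^ 2 + signWeight (-(ε k * t k)) ^ 2) := by
  simp_rw [← Finset.prod_pow]
  rw [← Fintype.piFinset_univ,
    Finset.sum_prod_piFinset _ fun k (η : ℤˣ) => signWeight (η * t k) ^ 2]
  refine Finset.prod_congr rfl fun k _ => ?_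
  rcases Int.units_eq_one_or (ε k) with h | h <;> simp [UnitsInt.univ, h, add_comm]

theorem prod_exp_abs_sub_one_le {ε : κ → ℤˣ} {t : κ → ℝ}
    (close : ∑ k, |(ε k : ℝ) - t k| ≤ Fintype.card κ / 40) :
    ∏ k, (6 / 5 * Real.exp (8 * |ε k * t k - 1|)) ≤ (3 / 2) ^ Fintype.card κ := by
  have abs_eq (k : κ) : |ε k * t k - 1| = |(ε k : ℝ) - t k| := by
    rcases Int.units_eq_one_or (ε k) with h | h
    · simp [h, abs_sub_comm]
    · simp [h, abs_sub_comm (-t k) 1, ← abs_neg (-1 - t k), add_comm]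
  have exp_le : Real.exp (1 / 5) ≤ 5 / 4 :=
    (Real.exp_bound_div_one_sub_of_interval (by norm_num) (by norm_num)).trans_eq (by norm_num)
  calc ∏ k, (6 / 5 * Real.exp (8 * |ε k * t k - 1|))
      = (6 / 5) ^ Fintype.card κ * Real.exp (8 * ∑ k, |(ε k : ℝ) - t k|) := by
        simp only [abs_eq, Finset.prod_mul_distrib, Finset.prod_const, Finset.card_univ,
          Finset.mul_sum, Real.exp_sum]
    _ ≤ (6 / 5) ^ Fintype.card κ * Real.exp (Fintype.card κ * (1 / 5)) := by
        refine mul_le_mul_of_nonneg_left (Real.exp_le_exp.2 ?_) (by positivity)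
        linarith
    _ ≤ (6 / 5) ^ Fintype.card κ * (5 / 4) ^ Fintype.card κ := by
        rw [Real.exp_nat_mul]
        gcongr
    _ = (3 / 2) ^ Fintype.card κ := by rw [← mul_pow]; norm_num

theorem sum_prod_signWeight_sq_le [DecidableEq κ] {ε : κ → ℤˣ} {t : κ → ℝ}
    (close : ∑ k, |(ε k : ℝ) - t k| ≤ Fintype.card κ / 40) :
    (2 / 3) ^ Fintype.card κ * ∑ η : κ → ℤˣ, (∏ k, signWeight (η k * t k)) ^ 2 ≤
      (∏ k, signWeight (ε k * t k)) ^ 2 := by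
  calc (2 / 3) ^ Fintype.card κ * ∑ η : κ → ℤˣ, (∏ k, signWeight (η k * t k)) ^ 2
      ≤ (2 / 3) ^ Fintype.card κ *
          ∏ k, (6 / 5 * Real.exp (8 * |ε k * t k - 1|) * signWeight (ε k * t k) ^ 2) := by
        rw [sum_prod_signWeight_sq ε]
        gcongr
        exact signWeight_sq_add_le _
    _ ≤ (2 / 3) ^ Fintype.card κ *
          ((3 / 2) ^ Fintype.card κ * (∏ k, signWeight (ε k * t k)) ^ 2) := by
        rw [Finset.prod_mul_distrib, Finset.prod_pow]
        gcongr
        exact prod_exp_abs_sub_one_le close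
    _ = (∏ k, signWeight (ε k * t k)) ^ 2 := by
        rw [← mul_assoc, ← mul_pow]
        norm_num

theorem totalDegree_prod_one_add_C_mul_sq_add_one_le {R σ : Type*} [CommRing R]
    {F : κ → MvPolynomial σ R} {D : ℕ} (hF : ∀ k, (F k).totalDegree ≤ D) (a : κ → R) :
    (∏ k, ((1 + C (a k) * F k) ^ 2 + 1)).totalDegree ≤ Fintype.card κ * (2 * D) := by
  refine (totalDegree_finsetProd _ _).trans (Finset.sum_le_card_nsmul _ _ _ fun k _ => ?_)
  have totalDegree_C_mul_le : (C (a k) * F k).totalDegree ≤ D :=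
    (totalDegree_mul _ _).trans (by simpa using hF k)
  have totalDegree_factor_le : (1 + C (a k) * F k).totalDegree ≤ D :=
    (totalDegree_add _ _).trans (max_le (by simp) totalDegree_C_mul_le)
  exact (totalDegree_add _ _).trans (max_le
    ((totalDegree_pow _ _).trans (Nat.mul_le_mul_left _ totalDegree_factor_le)) (by simp))

theorem exists_signs_card_div_le_sum_abs_sub_eval {σ : Type*} [Fintype σ]
    {F : κ → MvPolynomial σ ℝ} {D : ℕ} (hF : ∀ k, (F k).totalDegree ≤ D) {x : ℝ} (hx0 : 0 ≤ x)
    (hx1 : x < 1)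
    (few_parameters : (1 - x)⁻¹ ^ Fintype.card σ <
      (4 / 3) ^ Fintype.card κ * x ^ (Fintype.card κ * (2 * D))) :
    ∃ ε : κ → ℤˣ, ∀ u : σ → ℝ, (Fintype.card κ : ℝ) / 40 ≤ ∑ k, |(ε k : ℝ) - eval u (F k)| := by
  classical
  by_contra! all_close
  let G (η : κ → ℤˣ) : MvPolynomial σ ℝ := ∏ k, ((1 + C (η k : ℝ) * F k) ^ 2 + 1)
  have eval_G (u : σ → ℝ) (η : κ → ℤˣ) :
      eval u (G η) = ∏ k, signWeight (η k * eval u (F k)) := by simp [G, signWeight]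
  set V := Submodule.span ℝ (Set.range fun u η => eval u (G η))
  have finrank_ge : (2 / 3 : ℝ) ^ Fintype.card κ * Fintype.card (κ → ℤˣ) ≤ finrank ℝ V := by
    refine mul_card_le_finrank_of_le_sq_apply V fun ε => ?_
    obtain ⟨u, hu⟩ := all_close ε
    refine ⟨fun η => eval u (G η), Submodule.subset_span ⟨u, rfl⟩, fun h => ?_, ?_⟩
    · have prod_pos : 0 < ∏ k, signWeight (ε k * eval u (F k)) :=
        Finset.prod_pos fun _ _ => signWeight_pos _
      exact prod_pos.ne' ((eval_G u ε).symm.trans (congrFun h ε))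
    · simpa only [eval_G] using sum_prod_signWeight_sq_le hu.le
  have finrank_le : (finrank ℝ V : ℝ) * x ^ (Fintype.card κ * (2 * D)) ≤
      (1 - x)⁻¹ ^ Fintype.card σ := by
    refine le_trans ?_
      (finrank_restrictTotalDegree_mul_pow_le (K := ℝ) (Fintype.card κ * (2 * D)) hx0 hx1)
    gcongr
    exact finrank_span_range_eval_le fun η => totalDegree_prod_one_add_C_mul_sq_add_one_le hF _
  have card_eq : (2 / 3 : ℝ) ^ Fintype.card κ * Fintype.card (κ → ℤˣ) =
      (4 / 3) ^ Fintype.card κ := by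
    rw [Fintype.card_fun, Fintype.card_units_int, Nat.cast_pow, ← mul_pow]
    norm_num
  rw [card_eq] at finrank_ge
  exact few_parameters.not_ge (finrank_le.trans' (by gcongr))

end SignPatterns

/-! ### Sign tensors far from tensors of small rank -/

/-- The sum of the `m` rank-one tensors `⨂ i, u s i`; for `ι = ℝ` this is the general approximant
in the definition of `theta1`, for finite `ι` a tensor of rank at most `m`. -/
def tensorSum {m : ℕ} {δ ι : Type*} [Fintype δ] (u : Fin m → δ → ι → ℝ) (x : δ → ι) : ℝ :=
  ∑ s, ∏ i, u s i (x i)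

section TensorSum

variable {m : ℕ} {δ ι : Type*} [Fintype δ] [Nonempty δ]

theorem tensorSum_zero : tensorSum (0 : Fin m → δ → ι → ℝ) = 0 := by
  funext x
  simp [tensorSum]

theorem exists_tensorSum_eq_mul (a : ℝ) (u : Fin m → δ → ι → ℝ) :
    ∃ v : Fin m → δ → ι → ℝ, ∀ x, tensorSum v x = a * tensorSum u x := by
  classical
  obtain ⟨i₀⟩ := ‹Nonempty δ›
  refine ⟨fun s i y => (if i = i₀ then a else 1) * u s i y, fun x => ?_⟩
  simp only [tensorSum, Finset.prod_mul_distrib, Finset.prod_ite_eq', Finset.mem_univ, if_true,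
    Finset.mul_sum]

theorem mul_le_sum_abs_mul_sub_tensorSum [Fintype (δ → ι)] {c : (δ → ι) → ℝ} {S : ℝ}
    (far : ∀ u : Fin m → δ → ι → ℝ, S ≤ ∑ k, |c k - tensorSum u k|) {a : ℝ} (ha : 0 < a)
    (u : Fin m → δ → ι → ℝ) : a * S ≤ ∑ k, |a * c k - tensorSum u k| := by
  obtain ⟨v, hv⟩ := exists_tensorSum_eq_mul a⁻¹ u
  calc a * S ≤ a * ∑ k, |c k - tensorSum v k| := mul_le_mul_of_nonneg_left (far v) ha.le
    _ = ∑ k, |a * c k - tensorSum u k| := by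
      rw [Finset.mul_sum]
      refine Finset.sum_congr rfl fun k _ => ?_
      rw [hv, ← abs_of_pos ha, ← abs_mul, abs_of_pos ha, mul_sub, mul_inv_cancel_left₀ ha.ne']

end TensorSum

theorem four_fifths_le_one_sub_pow {d : ℕ} (hd : d ≠ 0) :
    (4 / 5 : ℝ) ≤ (1 - (10 * (d : ℝ))⁻¹) ^ (2 * d) := by
  have d_ge : (1 : ℝ) ≤ d := by exact_mod_cast Nat.one_le_iff_ne_zero.2 hd
  have inv_le : (10 * (d : ℝ))⁻¹ ≤ 1 := inv_le_one_of_one_le₀ (by linarith)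
  calc (4 / 5 : ℝ) = 1 + (2 * d : ℕ) * -(10 * (d : ℝ))⁻¹ := by
        push_cast
        field_simp
        norm_num
    _ ≤ (1 + -(10 * (d : ℝ))⁻¹) ^ (2 * d) := one_add_mul_le_pow (by linarith) _
    _ = (1 - (10 * (d : ℝ))⁻¹) ^ (2 * d) := by rw [sub_eq_add_neg]

/-- Instance of the hypothesis `few_parameters` of `exists_signs_card_div_le_sum_abs_sub_eval` for
`m * (d * n)` variables and `n ^ d` polynomials of degree `d`, at `x = 1 - 1 / (10 d)`. -/
theorem ten_mul_pow_lt_four_thirds_pow_mul_one_sub_inv_pow {d m n Q : ℕ} (hd : d ≠ 0)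
    (hm : m ≠ 0) (hn : n ≠ 0) (hQ : 10 * (d : ℝ) < (16 / 15) ^ Q)
    (small : Q * d * m ≤ n ^ (d - 1)) :
    (10 * (d : ℝ)) ^ (m * (d * n)) <
      (4 / 3) ^ n ^ d * (1 - (10 * (d : ℝ))⁻¹) ^ (n ^ d * (2 * d)) := by
  have exponent_le : Q * (m * (d * n)) ≤ n ^ d :=
    calc Q * (m * (d * n)) = Q * d * m * n := by ring
      _ ≤ n ^ (d - 1) * n := Nat.mul_le_mul_right _ small
      _ = n ^ d := pow_sub_one_mul hd n
  calc (10 * (d : ℝ)) ^ (m * (d * n)) < ((16 / 15) ^ Q) ^ (m * (d * n)) :=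
        pow_lt_pow_left₀ hQ (by positivity) (by positivity)
    _ = (16 / 15) ^ (Q * (m * (d * n))) := (pow_mul _ _ _).symm
    _ ≤ (16 / 15) ^ n ^ d := pow_le_pow_right₀ (by norm_num) exponent_le
    _ = (4 / 3) ^ n ^ d * (4 / 5) ^ n ^ d := by rw [← mul_pow]; norm_num
    _ ≤ (4 / 3) ^ n ^ d * ((1 - (10 * (d : ℝ))⁻¹) ^ (2 * d)) ^ n ^ d := by
        gcongr
        exact four_fifths_le_one_sub_pow hd
    _ = (4 / 3) ^ n ^ d * (1 - (10 * (d : ℝ))⁻¹) ^ (n ^ d * (2 * d)) := by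
        rw [← pow_mul, mul_comm (2 * d)]

theorem exists_signs_card_div_le_sum_abs_sub_tensorSum {δ ι : Type*} [Fintype δ] [Nonempty δ]
    [Fintype ι] [Nonempty ι] [DecidableEq δ] {m Q : ℕ} (hm : m ≠ 0)
    (hQ : 10 * (Fintype.card δ : ℝ) < (16 / 15) ^ Q)
    (small : Q * Fintype.card δ * m ≤ Fintype.card ι ^ (Fintype.card δ - 1)) :
    ∃ ε : (δ → ι) → ℤˣ, ∀ u : Fin m → δ → ι → ℝ,
      (Fintype.card ι : ℝ) ^ Fintype.card δ / 40 ≤ ∑ k, |(ε k : ℝ) - tensorSum u k| := by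
  set d := Fintype.card δ
  set n := Fintype.card ι
  have d_ge : (1 : ℝ) ≤ d := by exact_mod_cast Fintype.card_pos (α := δ)
  have inv_le : (10 * (d : ℝ))⁻¹ ≤ 1 := inv_le_one_of_one_le₀ (by linarith)
  have inv_pos : 0 < (10 * (d : ℝ))⁻¹ := by positivity
  let F (k : δ → ι) : MvPolynomial (Fin m × δ × ι) ℝ := ∑ s, ∏ i, X (s, i, k i)
  have totalDegree_F (k : δ → ι) : (F k).totalDegree ≤ d := by
    refine totalDegree_finsetSum_le fun s _ => (totalDegree_finsetProd _ _).trans ?_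
    simp [d]
  obtain ⟨ε, hε⟩ := exists_signs_card_div_le_sum_abs_sub_eval totalDegree_F
    (x := 1 - (10 * (d : ℝ))⁻¹) (by linarith) (by linarith) (by
      simpa [d, n] using ten_mul_pow_lt_four_thirds_pow_mul_one_sub_inv_pow
        Fintype.card_ne_zero hm Fintype.card_ne_zero hQ small)
  refine ⟨ε, fun u => ?_⟩
  simpa [F, tensorSum, d, n] using hε fun p => u p.1 p.2.1 p.2.2

/-! ### Mixed derivatives of locally separable functions -/

section MixedDerivatives

variable {d r : ℕ}

theorem pderm_prod {g : Fin d → ℝ → ℝ} (hg : ∀ i, Differentiable ℝ (g i)) (a : Fin d) :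
    pderm d a (fun x => ∏ i, g i (x i)) =
      fun x => (∏ i ∈ Finset.univ.erase a, g i (x i)) * deriv (g a) (x a) := by
  funext x
  have hasFDerivAt_factor (i : Fin d) (_ : i ∈ Finset.univ) :
      HasFDerivAt (fun x : Fin d → ℝ => g i (x i))
        (deriv (g i) (x i) • (ContinuousLinearMap.proj i : (Fin d → ℝ) →L[ℝ] ℝ)) x :=
    (hg i (x i)).hasDerivAt.comp_hasFDerivAt x (hasFDerivAt_apply i x)
  rw [pderm, (HasFDerivAt.finsetProd hasFDerivAt_factor).fderiv]
  simp [Pi.single_apply]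

theorem iterPD_prod {g : Fin d → ℝ → ℝ} (hg : ∀ i, ContDiff ℝ (⊤ : ℕ∞) (g i))
    (L : List (Fin d)) :
    iterPD d L (fun x => ∏ i, g i (x i)) =
      fun x => ∏ i, iteratedDeriv (L.count i) (g i) (x i) := by
  induction L with
  | nil => simp [iterPD]
  | cons a L ih =>
    have differentiable_factor (i : Fin d) : Differentiable ℝ (iteratedDeriv (L.count i) (g i)) :=
      (hg i).differentiable_iteratedDeriv _ (by exact_mod_cast WithTop.coe_lt_top _)
    funext x
    rw [iterPD, ih, pderm_prod differentiable_factor,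
      ← Finset.prod_erase_mul Finset.univ _ (Finset.mem_univ a), List.count_cons_self,
      iteratedDeriv_succ]
    refine congrArg (· * _) (Finset.prod_congr rfl fun i hi => ?_)
    rw [List.count_cons_of_ne (Finset.ne_of_mem_erase hi).symm]

theorem iterPD_eventuallyEq_mul {f F : (Fin d → ℝ) → ℝ} {x : Fin d → ℝ} {σ : ℝ}
    (h : f =ᶠ[nhds x] fun y => σ * F y) (L : List (Fin d)) :
    iterPD d L f =ᶠ[nhds x] fun y => σ * iterPD d L F y := by
  induction L with
  | nil => exact h
  | cons a L ih =>
    filter_upwards [ih.eventuallyEq_nhds] with y hy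
    have fderiv_mul : fderiv ℝ (fun y => σ * iterPD d L F y) y = σ • fderiv ℝ (iterPD d L F) y :=
      congrFun (fderiv_const_smul_field (f := iterPD d L F) σ) y
    simp [iterPD, pderm, hy.fderiv_eq, fderiv_mul]

theorem mem_Wmix_of_eventuallyEq_mul {f F : (Fin d → ℝ) → ℝ} {A : ℝ}
    (periodic : ∀ x i, f (Function.update x i (x i + 2 * Real.pi)) = f x)
    (locally_mul : ∀ x, ∃ σ : ℝ, |σ| ≤ A ∧ f =ᶠ[nhds x] fun y => σ * F y)
    (differentiable : ∀ L : List (Fin d), Differentiable ℝ (iterPD d L F))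
    (bound : ∀ L : List (Fin d), (∀ i, L.count i ≤ r) → ∀ x, A * |iterPD d L F x| ≤ 1) :
    f ∈ Wmix d r := by
  refine ⟨periodic, fun L hL => ?_⟩
  have differentiable_iterPD : Differentiable ℝ (iterPD d L f) := fun x => by
    obtain ⟨σ, -, h⟩ := locally_mul x
    exact ((differentiable L x).const_mul σ).congr_of_eventuallyEq (iterPD_eventuallyEq_mul h L)
  refine ⟨differentiable_iterPD.continuous, fun x => ?_, fun _ => differentiable_iterPD⟩
  obtain ⟨σ, hσ, h⟩ := locally_mul x
  calc |iterPD d L f x| = |σ| * |iterPD d L F x| := by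
        rw [(iterPD_eventuallyEq_mul h L).eq_of_nhds, abs_mul]
    _ ≤ A * |iterPD d L F x| := by gcongr
    _ ≤ 1 := bound L hL x

theorem continuous_of_mem_Wmix {f : (Fin d → ℝ) → ℝ} (hf : f ∈ Wmix d r) : Continuous f :=
  (hf.2 [] (by simp)).1

theorem abs_le_one_of_mem_Wmix {f : (Fin d → ℝ) → ℝ} (hf : f ∈ Wmix d r) (x : Fin d → ℝ) :
    |f x| ≤ 1 :=
  (hf.2 [] (by simp)).2.1 x

end MixedDerivatives

/-! ### Sums of disjoint bumps -/

theorem exists_norm_iteratedDeriv_le_of_periodic {E : Type*} [NormedAddCommGroup E]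
    [NormedSpace ℝ E] {f : ℝ → E} {T : ℝ} (hT : T ≠ 0) (hf : Function.Periodic f T) {r : ℕ}
    (smooth : ContDiff ℝ r f) :
    ∃ B, 0 < B ∧ ∀ k ≤ r, ∀ t, ‖iteratedDeriv k f t‖ ≤ B := by
  have bounded (k : ℕ) (hk : k ≤ r) : ∃ B, ∀ t, ‖iteratedDeriv k f t‖ ≤ B := by
    have periodic : Function.Periodic (iteratedDeriv k f) T := fun t => by
      simpa only [hf.funext] using (congrFun (iteratedDeriv_comp_add_const k f T) t).symm
    obtain ⟨B, hB⟩ := (periodic.isBounded_of_continuous hT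
      (smooth.continuous_iteratedDeriv k (by exact_mod_cast hk))).exists_norm_le
    exact ⟨B, fun t => hB _ ⟨t, rfl⟩⟩
  choose! B hB using bounded
  obtain ⟨M, hM⟩ := ((Finset.range (r + 1)).image B).bddAbove
  refine ⟨max M 1, by positivity, fun k hk t => (hB k hk t).trans (le_max_of_le_left (hM ?_))⟩
  exact Finset.mem_coe.2 (Finset.mem_image_of_mem B (Finset.mem_range_succ_iff.2 hk))

/-- A smooth `1`-periodic function vanishing near the integers. -/
noncomputable def periodicBump (q : ℝ) : ℝ := expNegInvGlue (-Real.cos (2 * Real.pi * q))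

theorem contDiff_periodicBump {k : ℕ∞} : ContDiff ℝ k periodicBump :=
  expNegInvGlue.contDiff.comp (Real.contDiff_cos.comp (contDiff_const.mul contDiff_id)).neg

theorem periodicBump_periodic : Function.Periodic periodicBump 1 := fun q => by
  simp [periodicBump, mul_add]

theorem le_periodicBump {q : ℝ} (hq : q ∈ Set.Icc (1 / 3) (2 / 3)) :
    expNegInvGlue (1 / 2) ≤ periodicBump q := by
  have pi_pos := Real.pi_pos
  refine expNegInvGlue.monotone ?_
  have dist_pi_le : |2 * Real.pi * q - Real.pi| ≤ Real.pi / 3 :=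
    abs_le.2 ⟨by nlinarith [hq.1], by nlinarith [hq.2]⟩
  rw [← Real.cos_sub_pi, ← Real.cos_abs, ← Real.cos_pi_div_three]
  exact Real.cos_le_cos_of_nonneg_of_le_pi (abs_nonneg _) (by linarith) dist_pi_le

theorem periodicBump_eventually_eq_zero_or_floor_eventually_eq (q : ℝ) :
    (∀ᶠ p in nhds q, periodicBump p = 0) ∨ ∀ᶠ p in nhds q, ⌊p⌋ = ⌊q⌋ := by
  rcases lt_or_ge 0 (Real.cos (2 * Real.pi * q)) with cos_pos | cos_nonpos
  · left
    have continuous_cos : Continuous fun p => Real.cos (2 * Real.pi * p) := by fun_prop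
    filter_upwards [continuous_cos.continuousAt.eventually (lt_mem_nhds cos_pos)] with p hp
    exact expNegInvGlue.zero_of_nonpos (by linarith)
  · right
    have floor_ne : (⌊q⌋ : ℝ) ≠ q := fun h => by
      rw [← h, mul_comm, Real.cos_int_mul_two_pi] at cos_nonpos
      linarith
    filter_upwards [Ioo_mem_nhds ((Int.floor_le q).lt_of_ne floor_ne) (Int.lt_floor_add_one q)]
      with p hp
    exact Int.floor_eq_iff.2 ⟨hp.1.le, hp.2⟩

/-- The affine coordinate mapping `[-π, π]` to `[0, n]`, so that the `n` cells of the subdivision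
of `[-π, π]` correspond to the unit intervals between consecutive integers. -/
noncomputable def cellCoord (n : ℕ) (t : ℝ) : ℝ := n * (t + Real.pi) / (2 * Real.pi)

/-- The index of the cell containing `t`, taken modulo `n` to make it `2π`-periodic. -/
noncomputable def cellIndex (n : ℕ) (t : ℝ) : ZMod n := (⌊cellCoord n t⌋ : ℤ)

/-- The tensor product of one bump per coordinate, repeated in each of the `n ^ d` cells. -/
noncomputable def bumpProd (n : ℕ) {d : ℕ} (x : Fin d → ℝ) : ℝ :=
  ∏ i, periodicBump (cellCoord n (x i))

/-- The function whose restriction to the cell with index `k` is `c k` times a bump; these are the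
test functions that are hard to approximate. -/
noncomputable def bumpSum {n d : ℕ} (c : (Fin d → ZMod n) → ℝ) (x : Fin d → ℝ) : ℝ :=
  c (fun i => cellIndex n (x i)) * bumpProd n x

theorem continuous_cellCoord (n : ℕ) : Continuous (cellCoord n) := by
  unfold cellCoord
  fun_prop

theorem cellCoord_add_two_pi (n : ℕ) (t : ℝ) :
    cellCoord n (t + 2 * Real.pi) = cellCoord n t + n := by
  unfold cellCoord
  field_simp
  ring

theorem cellIndex_periodic (n : ℕ) : Function.Periodic (cellIndex n) (2 * Real.pi) := fun t => by
  simp [cellIndex, cellCoord_add_two_pi]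

theorem periodicBump_cellCoord_periodic (n : ℕ) :
    Function.Periodic (fun t => periodicBump (cellCoord n t)) (2 * Real.pi) := fun t => by
  simpa only [cellCoord_add_two_pi, mul_one] using periodicBump_periodic.nat_mul n _

theorem apply_update_add_of_periodic {ι α β : Type*} [DecidableEq ι] [Add α] {g : α → β} {T : α}
    (hg : Function.Periodic g T) (x : ι → α) (i j : ι) :
    g (Function.update x i (x i + T) j) = g (x j) := by
  rcases eq_or_ne j i with rfl | hji
  · rw [Function.update_self, hg]
  · rw [Function.update_of_ne hji]

section BumpSum

variable {d n : ℕ} (c : (Fin d → ZMod n) → ℝ)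

theorem bumpSum_update_add_two_pi (x : Fin d → ℝ) (i : Fin d) :
    bumpSum c (Function.update x i (x i + 2 * Real.pi)) = bumpSum c x := by
  simp only [bumpSum, bumpProd, apply_update_add_of_periodic (cellIndex_periodic n),
    apply_update_add_of_periodic (periodicBump_cellCoord_periodic n)]

theorem exists_bumpSum_eventuallyEq_mul {A : ℝ} (hA : 0 ≤ A) (hc : ∀ k, |c k| ≤ A)
    (x : Fin d → ℝ) : ∃ σ, |σ| ≤ A ∧ bumpSum c =ᶠ[nhds x] fun y => σ * bumpProd n y := by
  have tendsto_coord (i : Fin d) : Filter.Tendsto (fun y : Fin d → ℝ => cellCoord n (y i)) (nhds x)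
      (nhds (cellCoord n (x i))) :=
    ((continuous_cellCoord n).comp (continuous_apply i)).tendsto x
  by_cases vanishing : ∃ i, ∀ᶠ p in nhds (cellCoord n (x i)), periodicBump p = 0
  · obtain ⟨i, hi⟩ := vanishing
    refine ⟨0, by simpa using hA, ?_⟩
    filter_upwards [(tendsto_coord i).eventually hi] with y hy
    have bumpProd_eq_zero : bumpProd n y = 0 := Finset.prod_eq_zero (Finset.mem_univ i) hy
    simp [bumpSum, bumpProd_eq_zero]
  · refine ⟨c fun i => cellIndex n (x i), hc _, ?_⟩
    have floor_eq (i : Fin d) : ∀ᶠ y in nhds x, ⌊cellCoord n (y i)⌋ = ⌊cellCoord n (x i)⌋ :=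
      (tendsto_coord i).eventually
        ((periodicBump_eventually_eq_zero_or_floor_eventually_eq _).resolve_left
          fun h => vanishing ⟨i, h⟩)
    filter_upwards [Filter.eventually_all.2 floor_eq] with y hy
    simp only [bumpSum, cellIndex, hy]

end BumpSum

theorem contDiff_periodicBump_cellCoord (n : ℕ) {k : ℕ∞} :
    ContDiff ℝ k fun t => periodicBump (cellCoord n t) :=
  contDiff_periodicBump.comp (by unfold cellCoord; fun_prop)

theorem iterPD_bumpProd (n : ℕ) {d : ℕ} (L : List (Fin d)) :
    iterPD d L (bumpProd n) =
      fun x => ∏ i, iteratedDeriv (L.count i) (fun t => periodicBump (cellCoord n t)) (x i) :=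
  iterPD_prod (fun _ => contDiff_periodicBump_cellCoord n) L

theorem differentiable_iterPD_bumpProd (n : ℕ) {d : ℕ} (L : List (Fin d)) :
    Differentiable ℝ (iterPD d L (bumpProd n)) := by
  rw [iterPD_bumpProd]
  have contDiff_factor (i : Fin d) :
      ContDiff ℝ (⊤ : ℕ∞) (iteratedDeriv (L.count i) fun t => periodicBump (cellCoord n t)) := by
    rw [iteratedDeriv_eq_iterate]
    exact (contDiff_periodicBump_cellCoord n).iterate_deriv _
  exact (contDiff_prod fun i _ => (contDiff_factor i).comp (contDiff_apply ℝ ℝ i)).differentiable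
    (by simp)

section DerivativeBounds

variable {r : ℕ} {B : ℝ} (n : ℕ) [NeZero n]

theorem abs_iteratedDeriv_periodicBump_cellCoord_le
    (hB : ∀ k ≤ r, ∀ t, |iteratedDeriv k periodicBump t| ≤ B) {k : ℕ}
    (hk : k ≤ r) (t : ℝ) :
    |iteratedDeriv k (fun t => periodicBump (cellCoord n t)) t| ≤ n ^ r * B := by
  have one_le_n : (1 : ℝ) ≤ n := by exact_mod_cast NeZero.one_le (n := n)
  have scale_le : n / (2 * Real.pi) ≤ (n : ℝ) :=
    div_le_self (by positivity) (by linarith [Real.pi_gt_three])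
  have iteratedDeriv_eq : iteratedDeriv k (fun t => periodicBump (cellCoord n t)) t =
      (n / (2 * Real.pi)) ^ k * iteratedDeriv k periodicBump (cellCoord n t) := by
    have shift := iteratedDeriv_comp_add_const k
      (fun t => periodicBump (n / (2 * Real.pi) * t)) Real.pi
    rw [iteratedDeriv_comp_const_mul contDiff_periodicBump] at shift
    simpa only [cellCoord, mul_div_right_comm] using congrFun shift t
  rw [iteratedDeriv_eq, abs_mul, abs_of_nonneg (by positivity)]
  calc (n / (2 * Real.pi)) ^ k * |iteratedDeriv k periodicBump (cellCoord n t)|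
      ≤ n ^ k * B := by gcongr; exact hB k hk _
    _ ≤ n ^ r * B := by
        have B_nonneg : 0 ≤ B := (abs_nonneg _).trans (hB k hk t)
        gcongr

theorem abs_iterPD_bumpProd_le (hB : ∀ k ≤ r, ∀ t, |iteratedDeriv k periodicBump t| ≤ B) {d : ℕ}
    {L : List (Fin d)} (hL : ∀ i, L.count i ≤ r) (x : Fin d → ℝ) :
    |iterPD d L (bumpProd n) x| ≤ (n ^ r * B) ^ d := by
  rw [iterPD_bumpProd, Finset.abs_prod]
  calc ∏ i, |iteratedDeriv (L.count i) (fun t => periodicBump (cellCoord n t)) (x i)|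
      ≤ ∏ _i : Fin d, (n ^ r * B) := Finset.prod_le_prod (fun _ _ => abs_nonneg _) fun i _ =>
        abs_iteratedDeriv_periodicBump_cellCoord_le n hB (hL i) (x i)
    _ = (n ^ r * B) ^ d := by simp

theorem bumpSum_mem_Wmix (hB0 : 0 < B)
    (hB : ∀ k ≤ r, ∀ t, |iteratedDeriv k periodicBump t| ≤ B) {d : ℕ}
    {c : (Fin d → ZMod n) → ℝ} (hc : ∀ k, |c k| ≤ ((n ^ r * B) ^ d)⁻¹) :
    bumpSum c ∈ Wmix d r := by
  have n_pos : (0 : ℝ) < n := by exact_mod_cast NeZero.pos n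
  refine mem_Wmix_of_eventuallyEq_mul (bumpSum_update_add_two_pi c)
    (exists_bumpSum_eventuallyEq_mul c (by positivity) hc) (differentiable_iterPD_bumpProd n)
    fun L hL x => ?_
  calc ((n ^ r * B) ^ d)⁻¹ * |iterPD d L (bumpProd n) x|
      ≤ ((n ^ r * B) ^ d)⁻¹ * (n ^ r * B) ^ d := by
        gcongr
        exact abs_iterPD_bumpProd_le n hB hL x
    _ = 1 := inv_mul_cancel₀ (by positivity)

end DerivativeBounds

/-! ### From the discrete to the continuous problem -/

theorem mul_measureReal_le_setIntegral_of_le_sum_translates {G κ : Type*} [AddGroup G]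
    [MeasurableSpace G] [MeasurableAdd G] {μ : Measure G} [μ.IsAddRightInvariant] [Fintype κ]
    {s D : Set G} {τ : κ → G} {h : G → ℝ} {c : ℝ} (hs : MeasurableSet s) (s_finite : μ s ≠ ⊤)
    (disjoint : Pairwise (Function.onFun Disjoint fun k => (· + τ k) '' s))
    (subset : ∀ k, (· + τ k) '' s ⊆ D) (h_nonneg : 0 ≤ h) (h_int : IntegrableOn h D μ)
    (le_sum : ∀ x ∈ s, c ≤ ∑ k, h (x + τ k)) :
    c * μ.real s ≤ ∫ x in D, h x ∂μ := by
  have embedding (k : κ) : MeasurableEmbedding (· + τ k) := measurableEmbedding_addRight _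
  have preserving (k : κ) : MeasurePreserving (· + τ k) μ μ := measurePreserving_add_right μ _
  have translate_int (k : κ) : IntegrableOn (fun x => h (x + τ k)) s μ :=
    ((preserving k).integrableOn_image (embedding k)).1 (h_int.mono_set (subset k))
  calc c * μ.real s = ∫ _x in s, c ∂μ := by rw [setIntegral_const, smul_eq_mul, mul_comm]
    _ ≤ ∫ x in s, ∑ k, h (x + τ k) ∂μ :=
        setIntegral_mono_on (integrableOn_const s_finite)
          (integrable_finsetSum _ fun k _ => translate_int k) hs le_sum
    _ = ∑ k, ∫ x in s, h (x + τ k) ∂μ := integral_finsetSum _ fun k _ => translate_int k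
    _ = ∑ k, ∫ x in (· + τ k) '' s, h x ∂μ :=
        Finset.sum_congr rfl fun k _ =>
          ((preserving k).setIntegral_image_emb (embedding k) h s).symm
    _ = ∫ x in ⋃ k, (· + τ k) '' s, h x ∂μ :=
        (integral_iUnion_fintype (fun k => (embedding k).measurableSet_image' hs) disjoint
          fun k => h_int.mono_set (subset k)).symm
    _ ≤ ∫ x in D, h x ∂μ :=
        setIntegral_mono_set h_int (Filter.Eventually.of_forall h_nonneg)
          (Set.iUnion_subset subset).eventuallyLE

/-- The translation carrying the cell with index `0` to the cell with index `k`. -/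
noncomputable def cellShift {n d : ℕ} (k : Fin d → ZMod n) (i : Fin d) : ℝ :=
  2 * Real.pi * (k i).val / n

/-- The middle third, in every coordinate, of the cell with index `0`. -/
def cellCore (n d : ℕ) : Set (Fin d → ℝ) :=
  Set.univ.pi fun _ => cellCoord n ⁻¹' Set.Icc (1 / 3) (2 / 3)

theorem pow_le_bumpProd {n d : ℕ} {x : Fin d → ℝ} (hx : x ∈ cellCore n d) :
    expNegInvGlue (1 / 2) ^ d ≤ bumpProd n x :=
  calc expNegInvGlue (1 / 2) ^ d = ∏ _i : Fin d, expNegInvGlue (1 / 2) := by simp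
    _ ≤ bumpProd n x := Finset.prod_le_prod (fun _ _ => expNegInvGlue.nonneg _)
        fun i _ => le_periodicBump (hx i trivial)

/-- The cube `[-π, π] ^ d`. -/
abbrev piCube (d : ℕ) : Set (Fin d → ℝ) := Set.univ.pi fun _ => Set.Icc (-Real.pi) Real.pi

theorem isCompact_piCube (d : ℕ) : IsCompact (piCube d) :=
  isCompact_univ_pi fun _ => isCompact_Icc

section Cells

variable {n d : ℕ} [NeZero n]

theorem cellCoord_add_cellShift (t : ℝ) (k : Fin d → ZMod n) (i : Fin d) :
    cellCoord n (t + cellShift k i) = cellCoord n t + (k i).val := by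
  have n_ne_zero : (n : ℝ) ≠ 0 := by exact_mod_cast NeZero.ne n
  unfold cellCoord cellShift
  field_simp
  ring

theorem cellIndex_add_cellShift {x : Fin d → ℝ} (hx : x ∈ cellCore n d) (k : Fin d → ZMod n)
    (i : Fin d) : cellIndex n (x i + cellShift k i) = k i := by
  obtain ⟨lower, upper⟩ := hx i trivial
  have floor_eq : ⌊cellCoord n (x i)⌋ = 0 := Int.floor_eq_zero_iff.2 ⟨by linarith, by linarith⟩
  rw [cellIndex, cellCoord_add_cellShift, Int.floor_add_natCast, floor_eq, zero_add,
    Int.cast_natCast, ZMod.natCast_zmod_val]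

theorem bumpProd_add_cellShift (x : Fin d → ℝ) (k : Fin d → ZMod n) :
    bumpProd n (x + cellShift k) = bumpProd n x := by
  refine Finset.prod_congr rfl fun i _ => ?_
  rw [Pi.add_apply, cellCoord_add_cellShift]
  simpa only [mul_one] using periodicBump_periodic.nat_mul (k i).val _

theorem bumpSum_add_cellShift (c : (Fin d → ZMod n) → ℝ) {x : Fin d → ℝ} (hx : x ∈ cellCore n d)
    (k : Fin d → ZMod n) : bumpSum c (x + cellShift k) = bumpProd n x * c k := by
  simp only [bumpSum, bumpProd_add_cellShift, Pi.add_apply, cellIndex_add_cellShift hx, mul_comm]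

theorem preimage_cellCoord_Icc (a b : ℝ) : cellCoord n ⁻¹' Set.Icc a b =
    Set.Icc (2 * Real.pi / n * a - Real.pi) (2 * Real.pi / n * b - Real.pi) := by
  have n_pos : (0 : ℝ) < n := by exact_mod_cast NeZero.pos n
  have two_pi_pos := Real.two_pi_pos
  ext t
  rw [Set.mem_preimage, Set.mem_Icc, Set.mem_Icc, cellCoord, sub_le_iff_le_add,
    le_sub_iff_add_le, le_div_iff₀ two_pi_pos, div_le_iff₀ two_pi_pos, div_mul_eq_mul_div,
    div_mul_eq_mul_div, div_le_iff₀ n_pos, le_div_iff₀ n_pos, mul_comm a, mul_comm b,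
    mul_comm (n : ℝ)]

theorem cellCore_eq_Icc : cellCore n d =
    Set.Icc (fun _ => 2 * Real.pi / n * (1 / 3) - Real.pi)
      fun _ => 2 * Real.pi / n * (2 / 3) - Real.pi := by
  rw [cellCore, preimage_cellCoord_Icc, Set.pi_univ_Icc]

theorem measurableSet_cellCore : MeasurableSet (cellCore n d) :=
  cellCore_eq_Icc (n := n) ▸ measurableSet_Icc

theorem volume_real_cellCore : volume.real (cellCore n d) = (2 * Real.pi / (3 * n)) ^ d := by
  rw [cellCore_eq_Icc, Measure.real, Real.volume_Icc_pi_toReal fun _ => by gcongr; norm_num]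
  simp only [Finset.prod_const, Finset.card_univ, Fintype.card_fin]
  ring

theorem image_add_cellShift_cellCore_subset (k : Fin d → ZMod n) :
    (· + cellShift k) '' cellCore n d ⊆ piCube d := by
  rintro _ ⟨x, hx, rfl⟩ i -
  obtain ⟨lower, upper⟩ := hx i trivial
  have val_succ_le : ((k i).val : ℝ) + 1 ≤ n := by exact_mod_cast ZMod.val_lt (k i)
  have coord_mem : cellCoord n (x i + cellShift k i) ∈ Set.Icc 0 (n : ℝ) := by
    rw [cellCoord_add_cellShift]
    exact ⟨by positivity, by linarith⟩
  have n_ne_zero : (n : ℝ) ≠ 0 := by exact_mod_cast NeZero.ne n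
  rw [← Set.mem_preimage, preimage_cellCoord_Icc, mul_zero, zero_sub,
    div_mul_cancel₀ _ n_ne_zero] at coord_mem
  exact ⟨coord_mem.1, coord_mem.2.trans_eq (by ring)⟩

theorem pairwise_disjoint_image_add_cellShift_cellCore :
    Pairwise (Function.onFun Disjoint fun k : Fin d → ZMod n =>
      (· + cellShift k) '' cellCore n d) := by
  refine fun k l hkl => Set.disjoint_left.2 ?_
  rintro _ ⟨x, hx, rfl⟩ ⟨y, hy, hyx⟩
  refine hkl (funext fun i => ?_)
  rw [← cellIndex_add_cellShift hx k i, ← cellIndex_add_cellShift hy l i]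
  exact congrArg (cellIndex n) (congrFun hyx i).symm

theorem continuous_bumpSum (c : (Fin d → ZMod n) → ℝ) : Continuous (bumpSum c) := by
  refine continuous_iff_continuousAt.2 fun x => ?_
  obtain ⟨σ, -, h⟩ := exists_bumpSum_eventuallyEq_mul c (A := ∑ k, |c k|) (by positivity)
    (fun k => Finset.single_le_sum (f := fun k => |c k|) (fun _ _ => abs_nonneg _)
      (Finset.mem_univ k)) x
  have continuous_bumpProd : Continuous (bumpProd (d := d) n) :=
    (differentiable_iterPD_bumpProd n []).continuous
  exact (continuous_bumpProd.const_mul σ).continuousAt.congr h.symm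

end Cells

section Theta

variable {d m : ℕ} [NeZero d] {μ : Measure (Fin d → ℝ)} {f : (Fin d → ℝ) → ℝ}

theorem le_theta1 {a : ℝ} (h : ∀ u : Fin m → Fin d → ℝ → ℝ, Integrable (tensorSum u) μ →
    a ≤ ∫ x, |f x - tensorSum u x| ∂μ) : a ≤ theta1 d m μ f := by
  refine le_csInf ⟨_, 0, fun _ _ => measurable_const, ?_, rfl⟩ ?_
  · change Integrable (tensorSum 0) μ
    exact tensorSum_zero (δ := Fin d) ▸ integrable_zero _ _ _
  · rintro _ ⟨u, -, hu, rfl⟩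
    exact h u hu

theorem theta1_le_integral_abs : theta1 d m μ f ≤ ∫ x, |f x| ∂μ := by
  refine csInf_le ⟨0, ?_⟩ ⟨0, fun _ _ => measurable_const, ?_, ?_⟩
  · rintro _ ⟨u, -, -, rfl⟩
    exact integral_nonneg fun _ => abs_nonneg _
  · change Integrable (tensorSum 0) μ
    exact tensorSum_zero (δ := Fin d) ▸ integrable_zero _ _ _
  · change _ = ∫ x, |f x - tensorSum 0 x| ∂μ
    simp [tensorSum_zero]

theorem theta1_le_volume_real_of_mem_Wmix {r : ℕ} (hf : f ∈ Wmix d r) :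
    theta1 d m (volume.restrict (piCube d)) f ≤ volume.real (piCube d) :=
  calc theta1 d m (volume.restrict (piCube d)) f ≤ ∫ x in piCube d, |f x| := theta1_le_integral_abs
    _ ≤ ∫ _x in piCube d, (1 : ℝ) :=
        setIntegral_mono
          ((continuous_of_mem_Wmix hf).abs.continuousOn.integrableOn_compact (isCompact_piCube d))
          (integrableOn_const (isCompact_piCube d).measure_lt_top.ne) (abs_le_one_of_mem_Wmix hf)
    _ = volume.real (piCube d) := by simp

theorem theta1_le_iSup_of_mem_Wmix {r : ℕ} (hf : f ∈ Wmix d r) :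
    theta1 d m (volume.restrict (piCube d)) f ≤
      ⨆ g ∈ Wmix d r, theta1 d m (volume.restrict (piCube d)) g := by
  refine le_ciSup_of_le ⟨volume.real (piCube d), ?_⟩ f (ciSup_pos (f := fun _ => _) hf).ge
  rintro _ ⟨g, rfl⟩
  exact Real.iSup_le (fun hg => theta1_le_volume_real_of_mem_Wmix hg) measureReal_nonneg

theorem mul_pow_le_theta1_bumpSum {n : ℕ} [NeZero n] {c : (Fin d → ZMod n) → ℝ} {S : ℝ}
    (hS : 0 ≤ S) (far : ∀ u : Fin m → Fin d → ZMod n → ℝ, S ≤ ∑ k, |c k - tensorSum u k|) :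
    S * (expNegInvGlue (1 / 2) * (2 * Real.pi / (3 * n))) ^ d ≤
      theta1 d m (volume.restrict (piCube d)) (bumpSum c) := by
  refine le_theta1 fun u hu => ?_
  have core_finite : volume (cellCore n d) ≠ ⊤ := by
    rw [cellCore_eq_Icc]
    exact isCompact_Icc.measure_lt_top.ne
  have bumpSum_integrable : IntegrableOn (bumpSum c) (piCube d) :=
    (continuous_bumpSum c).continuousOn.integrableOn_compact (isCompact_piCube d)
  have le_sum (x : Fin d → ℝ) (hx : x ∈ cellCore n d) : S * expNegInvGlue (1 / 2) ^ d ≤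
      ∑ k : Fin d → ZMod n, |bumpSum c (x + cellShift k) - tensorSum u (x + cellShift k)| := by
    have bumpProd_pos : 0 < bumpProd n x :=
      (pow_pos (expNegInvGlue.pos_of_pos (by norm_num)) d).trans_le (pow_le_bumpProd hx)
    calc S * expNegInvGlue (1 / 2) ^ d ≤ bumpProd n x * S := by
          rw [mul_comm]
          gcongr
          exact pow_le_bumpProd hx
      _ ≤ ∑ k, |bumpProd n x * c k - tensorSum u (x + cellShift k)| :=
          mul_le_sum_abs_mul_sub_tensorSum far bumpProd_pos
            fun s i j => u s i (x i + 2 * Real.pi * j.val / n)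
      _ = ∑ k, |bumpSum c (x + cellShift k) - tensorSum u (x + cellShift k)| := by
          simp only [bumpSum_add_cellShift c hx]
  calc S * (expNegInvGlue (1 / 2) * (2 * Real.pi / (3 * n))) ^ d
      = S * expNegInvGlue (1 / 2) ^ d * volume.real (cellCore n d) := by
        rw [volume_real_cellCore, mul_pow, mul_assoc]
    _ ≤ ∫ x in piCube d, |bumpSum c x - tensorSum u x| :=
        mul_measureReal_le_setIntegral_of_le_sum_translates measurableSet_cellCore core_finite
          pairwise_disjoint_image_add_cellShift_cellCore image_add_cellShift_cellCore_subset
          (fun _ => abs_nonneg _) (bumpSum_integrable.sub hu).abs le_sum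

end Theta

theorem exists_mem_Wmix_mul_inv_pow_le_theta1 (d r : ℕ) [NeZero d] :
    ∃ C : ℕ, C ≠ 0 ∧ ∃ c : ℝ, 0 < c ∧ ∀ m n : ℕ, m ≠ 0 → n ≠ 0 → C * m ≤ n ^ (d - 1) →
      ∃ f ∈ Wmix d r, c * ((n : ℝ) ^ (r * d))⁻¹ ≤ theta1 d m (volume.restrict (piCube d)) f := by
  obtain ⟨B, B_pos, hB⟩ := exists_norm_iteratedDeriv_le_of_periodic one_ne_zero
    periodicBump_periodic (contDiff_periodicBump (k := r))
  obtain ⟨Q, hQ⟩ := pow_unbounded_of_one_lt (10 * (d : ℝ)) (by norm_num : (1 : ℝ) < 16 / 15)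
  have bump_pos : 0 < expNegInvGlue (1 / 2) := expNegInvGlue.pos_of_pos (by norm_num)
  have Q_ne_zero : Q ≠ 0 := by
    rintro rfl
    have one_le_d : (1 : ℝ) ≤ d := by exact_mod_cast NeZero.one_le (n := d)
    linarith
  refine ⟨Q * d, mul_ne_zero Q_ne_zero (NeZero.ne d),
    (expNegInvGlue (1 / 2) * (2 * Real.pi / 3) / B) ^ d / 40, by positivity,
    fun m n hm hn small => ?_⟩
  have : NeZero n := ⟨hn⟩
  obtain ⟨ε, far⟩ := exists_signs_card_div_le_sum_abs_sub_tensorSum (δ := Fin d) (ι := ZMod n) hm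
    (Q := Q) (by simpa using hQ) (by simpa [ZMod.card] using small)
  simp only [ZMod.card, Fintype.card_fin] at far
  have A_pos : 0 < ((n ^ r * B) ^ d)⁻¹ := by positivity
  refine ⟨bumpSum fun k => ((n ^ r * B) ^ d)⁻¹ * ε k, bumpSum_mem_Wmix n B_pos hB fun k => ?_, ?_⟩
  · rcases Int.units_eq_one_or (ε k) with h | h <;> simp [h, abs_of_pos B_pos]
  · refine le_trans (le_of_eq ?_) (mul_pow_le_theta1_bumpSum (by positivity)
      (mul_le_sum_abs_mul_sub_tensorSum far A_pos))
    simp only [mul_pow, div_pow, pow_mul]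
    field_simp

theorem exists_nat_le_pow_and_le_two_mul_rpow {y : ℝ} (hy : 1 ≤ y) {p : ℕ} (hp : p ≠ 0) :
    ∃ n : ℕ, n ≠ 0 ∧ y ≤ n ^ p ∧ (n : ℝ) ≤ 2 * y ^ (p : ℝ)⁻¹ := by
  have root_ge : 1 ≤ y ^ (p : ℝ)⁻¹ := Real.one_le_rpow hy (by positivity)
  refine ⟨⌈y ^ (p : ℝ)⁻¹⌉₊, (Nat.ceil_pos.2 (by linarith)).ne', ?_, ?_⟩
  · calc y = (y ^ (p : ℝ)⁻¹) ^ p := (Real.rpow_inv_natCast_pow (by linarith) hp).symm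
      _ ≤ (⌈y ^ (p : ℝ)⁻¹⌉₊ : ℝ) ^ p := by
        gcongr
        exact Nat.le_ceil _
  · linarith [Nat.ceil_lt_add_one (by linarith : 0 ≤ y ^ (p : ℝ)⁻¹)]

theorem exists_nat_mul_le_pow_and_mul_rpow_le_inv_pow {C p : ℕ} (hC : C ≠ 0) (hp : p ≠ 0) (N : ℕ) :
    ∃ a : ℝ, 0 < a ∧ ∀ m : ℕ, m ≠ 0 →
      ∃ n : ℕ, n ≠ 0 ∧ C * m ≤ n ^ p ∧ a * (m : ℝ) ^ (-(N : ℝ) / p) ≤ ((n : ℝ) ^ N)⁻¹ := by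
  refine ⟨((2 * (C : ℝ) ^ (p : ℝ)⁻¹) ^ N)⁻¹, by positivity, fun m hm => ?_⟩
  have one_le_mul : (1 : ℝ) ≤ C * m := by
    exact_mod_cast Nat.one_le_iff_ne_zero.2 (mul_ne_zero hC hm)
  obtain ⟨n, n_ne_zero, le_pow, n_le⟩ := exists_nat_le_pow_and_le_two_mul_rpow one_le_mul hp
  refine ⟨n, n_ne_zero, by exact_mod_cast le_pow, ?_⟩
  have rpow_eq : (m : ℝ) ^ (-(N : ℝ) / p) = (((m : ℝ) ^ (p : ℝ)⁻¹) ^ N)⁻¹ := by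
    rw [← Real.rpow_mul_natCast m.cast_nonneg, ← Real.rpow_neg m.cast_nonneg, inv_mul_eq_div,
      neg_div]
  rw [rpow_eq, ← mul_inv, ← mul_pow, mul_assoc, ← Real.mul_rpow C.cast_nonneg m.cast_nonneg]
  gcongr

/-- Lower bound for classes of dominated mixed smoothness:
`Θ_m(W, L₁[-π,π]^d) ≥ c(r,d) m^{-rd/(d-1)}`. -/
theorem theta_mixed_smoothness_lower (d r : ℕ) (hd : 2 ≤ d) (hr : 1 ≤ r) :
    ∃ c : ℝ, 0 < c ∧ ∀ m : ℕ, 1 ≤ m →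
      c * (m : ℝ) ^ (-((r : ℝ) * (d : ℝ)) / ((d : ℝ) - 1)) ≤
        ⨆ f ∈ Wmix d r,
          theta1 d m (volume.restrict (Set.univ.pi fun _ => Set.Icc (-Real.pi) Real.pi)) f := by
  have : NeZero d := ⟨by omega⟩
  obtain ⟨C, C_ne_zero, c, c_pos, exists_hard⟩ := exists_mem_Wmix_mul_inv_pow_le_theta1 d r
  obtain ⟨a, a_pos, exists_scale⟩ := exists_nat_mul_le_pow_and_mul_rpow_le_inv_pow C_ne_zero
    (show d - 1 ≠ 0 by omega) (r * d)
  refine ⟨c * a, mul_pos c_pos a_pos, fun m hm => ?_⟩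
  obtain ⟨n, n_ne_zero, small, rpow_le⟩ := exists_scale m (by omega)
  obtain ⟨f, hf, le_theta⟩ := exists_hard m n (by omega) n_ne_zero small
  calc c * a * (m : ℝ) ^ (-((r : ℝ) * (d : ℝ)) / ((d : ℝ) - 1))
      = c * (a * (m : ℝ) ^ (-((r * d : ℕ) : ℝ) / ((d - 1 : ℕ) : ℝ))) := by
        rw [mul_assoc, Nat.cast_pred (by omega), Nat.cast_mul]
    _ ≤ c * ((n : ℝ) ^ (r * d))⁻¹ := by gcongr
    _ ≤ theta1 d m (volume.restrict (piCube d)) f := le_theta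
    _ ≤ ⨆ g ∈ Wmix d r, theta1 d m (volume.restrict (piCube d)) g := theta1_le_iSup_of_mem_Wmix hf
end
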